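/- There exists an involution φ̂ on S_n such that for every σ ∈ S_n, (31̲2(σ), 231̲(σ)) = (31̲2(φ̂(σ)), 213̲(φ̂(σ))); that is, φ̂ preserves the statistic \underline{31}2 and exchanges the statistics 2\underline{31} and 2\underline{13}. -/

import Mathlib

namespace Paper

variable {n : ℕ}

/-- The 1-based position corresponding to `i : Fin n`. -/
def pv (i : Fin n) : ℕ := (i : ℕ) + 1

/-- The 1-based letter of the word `f` at 1-based position `k` (0 if out of range). -/
def valAt (f : Fin n → Fin n) (k : ℕ) : ℕ :=
  if h : 1 ≤ k ∧ k ≤ n then ((f ⟨k - 1, by omega⟩ : Fin n) : ℕ) + 1 else 0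

/-- The map θ̂ : the 1-based `i`-th letter of `hatTheta f` is `σ̂_{n+1-i}`,
where `σ̂ₐ = n - a` (1-based) if `a < n` and `n̂ = n`. (0-based encoding.) -/
def hatTheta (f : Fin n → Fin n) (i : Fin n) : Fin n :=
  if ((f i.rev : ℕ)) = n - 1 then f i.rev
  else ⟨n - 2 - (f i.rev : ℕ), by have := i.isLt; omega⟩

end Paper

namespace Paper

variable {n : ℕ}

/-- 2\underline{13}(σ) = #{(ℓ,j) : σ⁻¹(ℓ) < j < n, σⱼ < ℓ < σ_{j+1}} (1-based). -/
def stat2_13 (σ : Equiv.Perm (Fin n)) : ℕ :=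
  (Finset.univ.filter (fun p : Fin n × Fin n =>
    pv (σ.symm p.1) < pv p.2 ∧ pv p.2 < n ∧
    valAt ⇑σ (pv p.2) < pv p.1 ∧ pv p.1 < valAt ⇑σ (pv p.2 + 1))).card

/-- 2\underline{31}(σ) = #{(ℓ,j) : σ⁻¹(ℓ) < j < n, σ_{j+1} < ℓ < σⱼ} (1-based). -/
def stat2_31 (σ : Equiv.Perm (Fin n)) : ℕ :=
  (Finset.univ.filter (fun p : Fin n × Fin n =>
    pv (σ.symm p.1) < pv p.2 ∧ pv p.2 < n ∧
    valAt ⇑σ (pv p.2 + 1) < pv p.1 ∧ pv p.1 < valAt ⇑σ (pv p.2))).card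

/-- \underline{31}2(σ) = #{(ℓ,j) : 1 < j < σ⁻¹(ℓ), σⱼ < ℓ < σ_{j-1}} (1-based). -/
def stat31_2 (σ : Equiv.Perm (Fin n)) : ℕ :=
  (Finset.univ.filter (fun p : Fin n × Fin n =>
    1 < pv p.2 ∧ pv p.2 < pv (σ.symm p.1) ∧
    valAt ⇑σ (pv p.2) < pv p.1 ∧ pv p.1 < valAt ⇑σ (pv p.2 - 1))).card

/-- \underline{13}2(σ) = #{(ℓ,j) : 1 < j < σ⁻¹(ℓ), σ_{j-1} < ℓ < σⱼ} (1-based). -/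
def stat13_2 (σ : Equiv.Perm (Fin n)) : ℕ :=
  (Finset.univ.filter (fun p : Fin n × Fin n =>
    1 < pv p.2 ∧ pv p.2 < pv (σ.symm p.1) ∧
    valAt ⇑σ (pv p.2 - 1) < pv p.1 ∧ pv p.1 < valAt ⇑σ (pv p.2))).card

end Paper

/-!
Prolong the word of `σ ∈ S_{n+1}` by the letters `n + 1, n + 2, …` and encode it by the permutation
`p` of `ℕ` that sends a letter to its position. Each letter `l` is the `2` of a number of patterns
`\underline{31}2` and of a number of patterns `2\underline{31}`, and together these are the descents
enclosing `l`. Inserting the letters in increasing order, as in the bijections of Françon and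
Viennot, one sees that these numbers, together with the knowledge of which letters are descent tops
and which are descent bottoms, determine the word.

Let `b` be the last letter of `σ`. Recorded upwards for the letters below `b` and downwards for the
letters above `b`, these data form two labelled lattice paths of the same kind, which end at the
same height. The only difference is that the second label counts the patterns `2\underline{31}`
below `b` and the patterns `2\underline{13}` above `b`; the other count follows from it, since a
word that passes from one side of `l` to the other crosses `l` alternately upwards and downwards.
Exchanging the two paths therefore preserves `\underline{31}2` and exchanges `2\underline{31}` and
`2\underline{13}`.

Every pair of paths comes from a permutation, because there are at most `(n + 1)!` pairs: there are
at most `m! * (m choose k)` paths with `m` steps and final height `k`, and Vandermonde's identity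
sums the products of these bounds.
-/

namespace Paper

open Finset

section Words

variable (p r : Equiv.Perm ℕ)

open scoped Classical in
/-- The letters `y < l` preceded by a letter larger than `l`: these are the bottoms of the descents
whose two letters enclose `l`. -/
noncomputable def crossing (l : ℕ) : Finset ℕ := {y ∈ range l | ∃ x, l < x ∧ p x + 1 = p y}

open scoped Classical in
/-- The letters `y < m` preceded by a letter that is at least `m`: these are the first letters of
the maximal factors of the word with letters in `{0, …, m - 1}`, except for a factor that opens the
word. -/
noncomputable def starts (m : ℕ) : Finset ℕ := {y ∈ range m | ∃ x, m ≤ x ∧ p x + 1 = p y}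

/-- The number of occurrences of `\underline{31}2` in which `l` plays the role of `2`. -/
noncomputable def before (l : ℕ) : ℕ := #{y ∈ crossing p l | p y < p l}

/-- The number of occurrences of `2\underline{31}` in which `l` plays the role of `2`. -/
noncomputable def after (l : ℕ) : ℕ := #{y ∈ crossing p l | p l < p y}

/-- Whether `l` is followed by a smaller letter. -/
def descentTop (l : ℕ) : Bool := decide (p.symm (p l + 1) < l)

/-- Whether `l` is preceded by a larger letter. At position `0` the truncated `p l - 1` makes the
condition `l < l`, so the first letter of the word is correctly not a descent bottom. -/
def descentBottom (l : ℕ) : Bool := decide (l < p.symm (p l - 1))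

variable {p r} {l m x y : ℕ}

theorem mem_crossing : y ∈ crossing p l ↔ y < l ∧ ∃ x, l < x ∧ p x + 1 = p y := by
  simp only [crossing, mem_filter, mem_range]

theorem mem_starts : y ∈ starts p m ↔ y < m ∧ ∃ x, m ≤ x ∧ p x + 1 = p y := by
  simp only [starts, mem_filter, mem_range]

theorem lt_of_mem_starts (hy : y ∈ starts p m) : y < m := (mem_starts.1 hy).1

theorem descentBottom_iff : descentBottom p l ↔ ∃ x, l < x ∧ p x + 1 = p l := by
  rw [descentBottom, decide_eq_true_iff]
  constructor
  · intro h
    have hx := p.apply_symm_apply (p l - 1)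
    have := p.injective.ne h.ne
    exact ⟨_, h, by omega⟩
  · rintro ⟨x, hx, e⟩
    rwa [← e, Nat.add_sub_cancel, p.symm_apply_apply]

theorem before_add_after : before p l + after p l = #(crossing p l) := by
  rw [← card_filter_add_card_filter_not (s := crossing p l) (fun y ↦ p y < p l)]
  refine congrArg (before p l + ·) (congrArg card (filter_congr fun y hy ↦ ?_))
  have := p.injective.ne (mem_crossing.1 hy).1.ne
  omega

theorem erase_starts : (starts p l).erase (p.symm (p l + 1)) = crossing p l := by
  ext y
  rw [mem_erase, mem_starts, mem_crossing, ne_eq, p.eq_symm_apply]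
  constructor
  · rintro ⟨hne, hy, x, hx, e⟩
    refine ⟨hy, x, hx.lt_of_ne ?_, e⟩
    rintro rfl
    exact hne e.symm
  · rintro ⟨hy, x, hx, e⟩
    have := p.injective.ne hx.ne
    exact ⟨by omega, hy, x, hx.le, e⟩

theorem erase_starts_succ : (starts p (l + 1)).erase l = crossing p l := by
  ext y
  rw [mem_erase, mem_starts, mem_crossing, ← and_assoc]
  exact and_congr_left' (by omega)

theorem symm_succ_mem_starts : p.symm (p l + 1) ∈ starts p l ↔ descentTop p l := by
  rw [mem_starts, descentTop, decide_eq_true_iff, p.apply_symm_apply]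
  exact and_iff_left ⟨l, le_rfl, rfl⟩

theorem mem_starts_succ_self : l ∈ starts p (l + 1) ↔ descentBottom p l := by
  rw [mem_starts, descentBottom_iff]
  exact and_iff_right l.lt_succ_self

theorem card_eq_card_erase_add {α : Type*} [DecidableEq α] {s : Finset α} {a : α} {t : Bool}
    (h : a ∈ s ↔ t) : #s = #(s.erase a) + t.toNat := by
  cases t
  · simp [erase_eq_of_notMem (fun ha ↦ Bool.false_ne_true (h.1 ha))]
  · exact (card_erase_add_one (h.2 rfl)).symm

theorem card_starts : #(starts p l) = #(crossing p l) + (descentTop p l).toNat := by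
  rw [card_eq_card_erase_add symm_succ_mem_starts, erase_starts]

theorem card_starts_succ :
    #(starts p (l + 1)) = #(crossing p l) + (descentBottom p l).toNat := by
  rw [card_eq_card_erase_add mem_starts_succ_self, erase_starts_succ]

theorem exists_mem_starts (hx : x < l) (h : p l < p x) :
    ∃ y ∈ starts p l, p l < p y ∧ p y ≤ p x := by
  obtain ⟨k, hk⟩ : ∃ k, p x = p l + 1 + k := Nat.exists_eq_add_of_le h
  induction k generalizing x with
  | zero => exact ⟨x, mem_starts.2 ⟨hx, l, le_rfl, hk.symm⟩, h, le_rfl⟩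
  | succ k ih =>
    obtain ⟨z, hz⟩ := p.surjective (p l + 1 + k)
    rcases lt_or_ge z l with hzl | hzl
    · obtain ⟨y, hy, h₁, h₂⟩ := ih hzl (by omega) hz
      exact ⟨y, hy, h₁, by omega⟩
    · exact ⟨x, mem_starts.2 ⟨hx, z, hzl, by omega⟩, h, le_rfl⟩

theorem before_eq_card_starts : before p l = #{y ∈ starts p l | p y < p l} := by
  rw [before, ← erase_starts, filter_erase, erase_eq_of_notMem]
  simp

-- The letter `l` lies outside the maximal factors of smaller letters, so its place is determined by
-- the number of such factors to its left.
theorem pos_lt_iff (hx : x < l) :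
    p x < p l ↔ #{y ∈ starts p l | p y ≤ p x} ≤ before p l := by
  rw [before_eq_card_starts]
  constructor
  · intro h
    refine card_le_card ?_
    exact monotone_filter_right _ fun y _ hy ↦ hy.trans_lt h
  · contrapose!
    intro h
    have hlx : p l < p x := h.lt_of_ne (p.injective.ne hx.ne')
    obtain ⟨y, hy, hly, hyx⟩ := exists_mem_starts hx hlx
    refine card_lt_card ((ssubset_iff_of_subset ?_).2 ⟨y, ?_, ?_⟩)
    · exact monotone_filter_right _ fun z _ hz ↦ (hz.trans hlx).le
    · exact mem_filter.2 ⟨hy, hyx⟩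
    · exact fun h' ↦ hly.not_gt (mem_filter.1 h').2

theorem mem_crossing_iff_of_mem_starts (hy : y ∈ starts p l) :
    y ∈ crossing p l ↔
      ¬(descentTop p l ∧ p l < p y ∧ ∀ z ∈ starts p l, p l < p z → ¬p z < p y) := by
  rw [← erase_starts, mem_erase, and_iff_left hy, ne_eq, not_iff_not]
  constructor
  · rintro rfl
    have := symm_succ_mem_starts.1 hy
    simp only [p.apply_symm_apply]
    exact ⟨this, by omega, fun z _ hz ↦ by omega⟩
  · rintro ⟨hd, hly, hmin⟩
    have := hmin _ (symm_succ_mem_starts.2 hd) (by simp)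
    rw [p.apply_symm_apply] at this
    rw [p.eq_symm_apply]
    omega

theorem starts_zero : starts p 0 = ∅ := by simp [starts]

/-- The letters below `m` occur in the same order in the words of `p` and `r`. -/
def SameOrder (p r : Equiv.Perm ℕ) (m : ℕ) : Prop :=
  ∀ x < m, ∀ y < m, (p x < p y ↔ r x < r y)

theorem SameOrder.succ (h : SameOrder p r l) (hs : starts p l = starts r l)
    (hb : before p l = before r l) : SameOrder p r (l + 1) := by
  have hl : ∀ x < l, (p x < p l ↔ r x < r l) := by
    intro x hx
    rw [pos_lt_iff hx, pos_lt_iff hx, hb, ← hs,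
      filter_congr (q := fun y ↦ r y ≤ r x) fun y hy ↦ ?_]
    simpa only [not_lt] using not_congr (h x hx y (lt_of_mem_starts hy))
  have hl' : ∀ x < l, (p l < p x ↔ r l < r x) := by
    intro x hx
    have := hl x hx
    have := p.injective.ne hx.ne
    have := r.injective.ne hx.ne
    omega
  intro x hx y hy
  rcases Nat.lt_succ_iff_lt_or_eq.1 hx with hx | rfl <;>
    rcases Nat.lt_succ_iff_lt_or_eq.1 hy with hy | rfl
  · exact h x hx y hy
  · exact hl x hx
  · exact hl' y hy
  · simp only [lt_irrefl]

theorem SameOrder.crossing_eq (h : SameOrder p r (l + 1)) (hs : starts p l = starts r l)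
    (ht : descentTop p l = descentTop r l) : crossing p l = crossing r l := by
  have hsub {q : Equiv.Perm ℕ} : crossing q l ⊆ starts q l := erase_starts ▸ erase_subset _ _
  ext y
  by_cases hy : y ∈ starts p l
  · have hlt {z : ℕ} (hz : z ∈ starts p l) : z < l + 1 := (lt_of_mem_starts hz).trans l.lt_succ_self
    rw [mem_crossing_iff_of_mem_starts hy, mem_crossing_iff_of_mem_starts (hs ▸ hy), ht, ← hs,
      h l l.lt_succ_self y (hlt hy)]
    refine not_congr (and_congr_right' (and_congr_right' (forall₂_congr fun z hz ↦ ?_)))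
    rw [h l l.lt_succ_self z (hlt hz), h z (hlt hz) y (hlt hy)]
  · exact iff_of_false (fun h ↦ hy (hsub h)) (fun h ↦ hy (hs ▸ hsub h))

theorem starts_succ_eq (hc : crossing p l = crossing r l)
    (hb : descentBottom p l = descentBottom r l) : starts p (l + 1) = starts r (l + 1) := by
  have hmem : l ∈ starts p (l + 1) ↔ l ∈ starts r (l + 1) := by
    rw [mem_starts_succ_self, mem_starts_succ_self, hb]
  rw [← erase_starts_succ, ← erase_starts_succ] at hc
  ext y
  rcases eq_or_ne y l with rfl | hy
  · exact hmem
  · simpa only [mem_erase, ne_eq, hy, not_false_eq_true, true_and] using Finset.ext_iff.1 hc y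

theorem eq_of_sameOrder (h : ∀ m, SameOrder p r m) : p = r := by
  let e : ℕ ≃o ℕ :=
    { toEquiv := p.symm.trans r
      map_rel_iff' := by
        intro i j
        have hlt := h (max (p.symm i) (p.symm j) + 1) (p.symm j) (by omega) (p.symm i) (by omega)
        rw [p.apply_symm_apply, p.apply_symm_apply] at hlt
        exact not_lt.symm.trans ((not_congr hlt.symm).trans not_lt) }
  have he : e = OrderIso.refl ℕ := Subsingleton.elim _ _
  ext x
  simpa [e] using (DFunLike.congr_fun he (p x)).symm

theorem eq_of_descents_eq (ht : ∀ l, descentTop p l = descentTop r l)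
    (hb : ∀ l, descentBottom p l = descentBottom r l) (hc : ∀ l, before p l = before r l) :
    p = r := by
  suffices h : ∀ m, SameOrder p r m ∧ starts p m = starts r m from eq_of_sameOrder fun m ↦ (h m).1
  intro m
  induction m with
  | zero => exact ⟨fun x hx ↦ absurd hx x.not_lt_zero, starts_zero.trans starts_zero.symm⟩
  | succ l ih =>
    have horder := ih.1.succ ih.2 (hc l)
    exact ⟨horder, starts_succ_eq (horder.crossing_eq ih.2 (ht l)) (hb l)⟩

end Words

section Paths

theorem toNat_add_toNat_not (t : Bool) : t.toNat + (!t).toNat = 1 := by cases t <;> rfl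

/-- A step of a history. A path whose current height is `k` first moves to the level `k` if `stays`
holds and to the level `k - 1` otherwise, is labelled there by `left` and `right`, whose sum is that
level, and then ends at a height one above the level if `rises` holds and at the level otherwise. -/
structure Step where
  stays : Bool
  left : ℕ
  right : ℕ
  rises : Bool
deriving DecidableEq

/-- The histories obtained by adding to a history `L ∈ H k` of final height `k` a step of level `h`
whose last part rises if and only if `t` holds; the latest step is the head of the list. -/
def prolong (H : ℕ → Finset (List Step)) (t : Bool) (h : ℕ) : Finset (List Step) :=
  (antidiagonal h ×ˢ H h).image (fun q ↦ ⟨true, q.1.1, q.1.2, t⟩ :: q.2) ∪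
    (antidiagonal h ×ˢ H (h + 1)).image (fun q ↦ ⟨false, q.1.1, q.1.2, t⟩ :: q.2)

/-- The sequences of `m` steps that lead from height `0` to height `k`. -/
def histories : ℕ → ℕ → Finset (List Step)
  | 0, 0 => {[]}
  | 0, _ + 1 => ∅
  | m + 1, 0 => prolong (histories m) false 0
  | m + 1, k + 1 => prolong (histories m) false (k + 1) ∪ prolong (histories m) true k

theorem cons_mem_prolong {H : ℕ → Finset (List Step)} {k a b : ℕ} {L : List Step} (hL : L ∈ H k)
    (s t : Bool) (hk : a + b + 1 = k + s.toNat) : ⟨s, a, b, t⟩ :: L ∈ prolong H t (a + b) := by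
  cases s
  · obtain rfl : k = a + b + 1 := hk.symm
    simp [prolong, hL]
  · obtain rfl : k = a + b := by simpa using hk.symm
    simp [prolong, hL]

theorem prolong_subset_histories (m : ℕ) (t : Bool) (h : ℕ) :
    prolong (histories m) t h ⊆ histories (m + 1) (h + t.toNat) := by
  cases t
  · cases h
    · exact Subset.rfl
    · exact subset_union_left
  · exact subset_union_right

theorem cons_mem_histories {m k a b : ℕ} {L : List Step} (hL : L ∈ histories m k) (s t : Bool)
    (hk : a + b + 1 = k + s.toNat) :
    ⟨s, a, b, t⟩ :: L ∈ histories (m + 1) (a + b + t.toNat) :=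
  prolong_subset_histories m t (a + b) (cons_mem_prolong hL s t hk)

theorem card_prolong_le (H : ℕ → Finset (List Step)) (t : Bool) (h : ℕ) :
    #(prolong H t h) ≤ (h + 1) * (#(H h) + #(H (h + 1))) := by
  rw [mul_add]
  refine (card_union_le _ _).trans (Nat.add_le_add ?_ ?_) <;>
    exact card_image_le.trans_eq (by rw [card_product, Nat.card_antidiagonal])

theorem card_histories_le (m k : ℕ) : #(histories m k) ≤ m.factorial * m.choose k := by
  induction m generalizing k with
  | zero => cases k <;> simp [histories]
  | succ m ih =>
    have hprolong (t : Bool) (h : ℕ) :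
        #(prolong (histories m) t h) ≤ (m + 1).factorial * m.choose h := calc
      _ ≤ (h + 1) * (m.factorial * m.choose h + m.factorial * m.choose (h + 1)) :=
        (card_prolong_le _ t h).trans (Nat.mul_le_mul_left _ (Nat.add_le_add (ih h) (ih (h + 1))))
      _ = m.factorial * ((m + 1).choose (h + 1) * (h + 1)) := by rw [Nat.choose_succ_succ']; ring
      _ = (m + 1).factorial * m.choose h := by
        rw [← Nat.add_one_mul_choose_eq, Nat.factorial_succ]; ring
    cases k with
    | zero => simpa [histories] using hprolong false 0
    | succ k =>
      calc
        _ ≤ (m + 1).factorial * m.choose (k + 1) + (m + 1).factorial * m.choose k :=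
          (card_union_le _ _).trans (Nat.add_le_add (hprolong false (k + 1)) (hprolong true k))
        _ = (m + 1).factorial * (m + 1).choose (k + 1) := by rw [Nat.choose_succ_succ']; ring

/-- A pair of histories together with the final height that they share. -/
structure Code where
  height : ℕ
  lower : List Step
  upper : List Step
deriving DecidableEq

/-- The pairs of histories that have the same final height and `n` steps in total. -/
def codes (n : ℕ) : Finset Code :=
  (antidiagonal n ×ˢ range (n + 1)).biUnion fun q ↦
    (histories q.1.1 q.2 ×ˢ histories q.1.2 q.2).image fun h ↦ ⟨q.2, h.1, h.2⟩

/-- The exchange of the two histories of a pair. -/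
def Code.swap (c : Code) : Code := ⟨c.height, c.upper, c.lower⟩

theorem Code.swap_involutive : Function.Involutive Code.swap := fun _ ↦ rfl

theorem mem_codes {n : ℕ} {c : Code} :
    c ∈ codes n ↔ c.height ≤ n ∧
      ∃ m j, m + j = n ∧ c.lower ∈ histories m c.height ∧ c.upper ∈ histories j c.height := by
  simp only [codes, mem_biUnion, mem_image, mem_product, HasAntidiagonal.mem_antidiagonal,
    mem_range]
  constructor
  · rintro ⟨⟨⟨m, j⟩, k⟩, ⟨hmj, hk⟩, ⟨L, M⟩, ⟨hL, hM⟩, rfl⟩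
    exact ⟨Nat.lt_succ_iff.1 hk, m, j, hmj, hL, hM⟩
  · rintro ⟨hk, m, j, hmj, hL, hM⟩
    exact ⟨((m, j), c.height), ⟨hmj, Nat.lt_succ_of_le hk⟩, (c.lower, c.upper), ⟨hL, hM⟩, rfl⟩

theorem Code.swap_mem_codes {n : ℕ} {c : Code} (hc : c ∈ codes n) : c.swap ∈ codes n := by
  obtain ⟨hk, m, j, hmj, hL, hM⟩ := mem_codes.1 hc
  exact mem_codes.2 ⟨hk, j, m, (add_comm j m).trans hmj, hM, hL⟩

theorem sum_choose_mul_choose (m j : ℕ) :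
    ∑ k ∈ range (m + j + 1), m.choose k * j.choose k = (m + j).choose j := calc
  _ = ∑ k ∈ range (j + 1), m.choose k * j.choose k := by
    symm
    refine sum_subset (range_mono (by omega)) fun k _ hk ↦ ?_
    rw [Nat.choose_eq_zero_of_lt (n := j) (by simpa using hk), mul_zero]
  _ = ∑ k ∈ range (j + 1), m.choose k * j.choose (j - k) :=
    sum_congr rfl fun k hk ↦ by rw [Nat.choose_symm (Nat.lt_succ_iff.1 (mem_range.1 hk))]
  _ = (m + j).choose j := by
    rw [Nat.add_choose_eq, Nat.sum_antidiagonal_eq_sum_range_succ_mk]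

theorem sum_card_histories_mul_le (m j : ℕ) :
    ∑ k ∈ range (m + j + 1), #(histories m k) * #(histories j k) ≤ (m + j).factorial := calc
  _ ≤ ∑ k ∈ range (m + j + 1), (m.factorial * m.choose k) * (j.factorial * j.choose k) :=
    sum_le_sum fun k _ ↦ Nat.mul_le_mul (card_histories_le m k) (card_histories_le j k)
  _ = (m + j).choose j * m.factorial * j.factorial := by
    rw [← sum_choose_mul_choose, sum_mul, sum_mul]
    exact sum_congr rfl fun k _ ↦ by ring
  _ = (m + j).factorial := Nat.add_choose_mul_factorial_mul_factorial m j

theorem card_codes_le (n : ℕ) : #(codes n) ≤ (n + 1).factorial := calc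
  _ ≤ ∑ q ∈ antidiagonal n, ∑ k ∈ range (n + 1), #(histories q.1 k) * #(histories q.2 k) := by
    rw [← sum_product']
    exact card_biUnion_le.trans (sum_le_sum fun q _ ↦ card_image_le.trans_eq (card_product _ _))
  _ ≤ ∑ _q ∈ antidiagonal n, n.factorial := by
    refine sum_le_sum fun q hq ↦ ?_
    simpa only [HasAntidiagonal.mem_antidiagonal.1 hq] using sum_card_histories_mul_le q.1 q.2
  _ = (n + 1).factorial := by
    rw [sum_const, Nat.card_antidiagonal, smul_eq_mul, Nat.factorial_succ]

end Paths

section Histories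

variable {p r : Equiv.Perm ℕ} {n l b : ℕ}

theorem card_ascents_add_eq_card_descents_add (w : ℕ → ℕ) {s : ℕ} (hs : s ≤ n)
    (hw : ∀ i, s ≤ i → w i ≠ l) :
    #{i ∈ Ico s n | w i < l ∧ l < w (i + 1)} + (decide (l < w s)).toNat =
      #{i ∈ Ico s n | w (i + 1) < l ∧ l < w i} + (decide (l < w n)).toNat := by
  induction n, hs using Nat.le_induction with
  | base => simp
  | succ n hn ih =>
    have hstep : (if w n < l ∧ l < w (n + 1) then 1 else 0) + (decide (l < w n)).toNat =
        (if w (n + 1) < l ∧ l < w n then 1 else 0) + (decide (l < w (n + 1))).toNat := by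
      rcases lt_or_gt_of_ne (hw n hn) with h₁ | h₁ <;>
        rcases lt_or_gt_of_ne (hw (n + 1) (hn.trans n.le_succ)) with h₂ | h₂ <;>
        simp [h₁, h₂, h₁.not_gt, h₂.not_gt]
    rw [card_filter, card_filter] at ih ⊢
    rw [sum_Ico_succ_top hn, sum_Ico_succ_top hn]
    omega

theorem pos_le (hp : ∀ x, n < x → p x = x) {x : ℕ} (hx : x ≤ n) : p x ≤ n := by
  by_contra! h
  exact h.not_ge ((p.injective (hp _ h)).trans_le hx)

theorem symm_le (hp : ∀ x, n < x → p x = x) {i : ℕ} (hi : i ≤ n) : p.symm i ≤ n :=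
  pos_le (fun x hx ↦ by rw [p.symm_apply_eq, hp x hx]) hi

theorem card_filter_crossing (hp : ∀ x, n < x → p x = x) (hl : l ≤ n) (T : ℕ → Prop)
    [DecidablePred T] :
    #{y ∈ crossing p l | T (p y)} =
      #{i ∈ range n | p.symm (i + 1) < l ∧ l < p.symm i ∧ T (i + 1)} := by
  refine card_nbij' (fun y ↦ p y - 1) (fun i ↦ p.symm (i + 1)) ?_ ?_ ?_ ?_
  · intro y hy
    simp only [coe_filter, Set.mem_ofPred_eq, mem_crossing, mem_range] at hy ⊢
    obtain ⟨⟨hyl, x, hx, e⟩, hT⟩ := hy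
    have := pos_le hp (hyl.le.trans hl)
    have hsub : p y - 1 + 1 = p y := by omega
    rw [hsub, p.symm_apply_apply, ← e, Nat.add_sub_cancel, p.symm_apply_apply, e]
    exact ⟨by omega, hyl, hx, hT⟩
  · intro i hi
    simp only [coe_filter, Set.mem_ofPred_eq, mem_crossing, mem_range, p.apply_symm_apply] at hi ⊢
    exact ⟨⟨hi.2.1, p.symm i, hi.2.2.1, by rw [p.apply_symm_apply]⟩, hi.2.2.2⟩
  · intro y hy
    obtain ⟨x, -, e⟩ := (mem_crossing.1 (mem_filter.1 hy).1).2
    simp only [← e, Nat.add_sub_cancel]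
    rw [e, p.symm_apply_apply]
  · intro i _
    simp

theorem after_eq (hp : ∀ x, n < x → p x = x) (hl : l ≤ n) :
    after p l = #{i ∈ Ico (p l + 1) n | p.symm (i + 1) < l ∧ l < p.symm i} := by
  rw [after, card_filter_crossing hp hl (p l < ·)]
  congr 1
  ext i
  simp only [mem_filter, mem_range, mem_Ico]
  have hne (h : l < p.symm i) : p l ≠ i := fun e ↦ h.ne (p.eq_symm_apply.2 e)
  omega

/-- The number of occurrences of `2\underline{13}` in which `l` plays the role of `2` and the other
two letters stand at positions at most `n`. -/
def ascentsAfter (n : ℕ) (p : Equiv.Perm ℕ) (l : ℕ) : ℕ :=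
  #{i ∈ Ico (p l + 1) n | p.symm i < l ∧ l < p.symm (i + 1)}

theorem ascentsAfter_add_one (hp : ∀ x, n < x → p x = x) (hl : l ≤ n) (hlast : l ≠ p.symm n) :
    ascentsAfter n p l + 1 =
      after p l + (descentTop p l).toNat + (decide (l < p.symm n)).toNat := by
  have hln : p l < n := (pos_le hp hl).lt_of_ne fun h ↦ hlast (p.eq_symm_apply.2 h)
  have hne (i : ℕ) (hi : p l + 1 ≤ i) : p.symm i ≠ l := by
    rw [ne_eq, p.symm_apply_eq]
    omega
  have h := card_ascents_add_eq_card_descents_add p.symm (Nat.succ_le_of_lt hln) hne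
  have hstart : (descentTop p l).toNat + (decide (l < p.symm (p l + 1))).toNat = 1 := by
    rw [descentTop]
    rcases lt_or_gt_of_ne (hne _ le_rfl) with h | h <;> simp [h, h.not_gt]
  rw [Nat.succ_eq_add_one, ← after_eq hp hl] at h
  rw [ascentsAfter]
  omega

theorem crossing_eq_empty (hp : ∀ x, n < x → p x = x) (hl : n ≤ l) : crossing p l = ∅ := by
  refine eq_empty_of_forall_notMem fun y hy ↦ ?_
  obtain ⟨hyl, x, hx, e⟩ := mem_crossing.1 hy
  rw [hp x (by omega), ← hp (x + 1) (by omega)] at e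
  have := p.injective e
  omega

theorem before_eq_zero (hp : ∀ x, n < x → p x = x) (hl : n ≤ l) : before p l = 0 := by
  rw [before, crossing_eq_empty hp hl, filter_empty, card_empty]

theorem descentBottom_eq_false (hp : ∀ x, n < x → p x = x) (hl : n ≤ l) :
    descentBottom p l = false := by
  rw [Bool.eq_false_iff, ne_eq, descentBottom_iff]
  rintro ⟨x, hx, e⟩
  rw [hp x (by omega), ← hp (x + 1) (by omega)] at e
  have := p.injective e
  omega

theorem descentTop_eq_false (hp : ∀ x, n < x → p x = x) (hl : n ≤ p l) :
    descentTop p l = false := by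
  rw [descentTop, p.symm_apply_eq.2 (hp _ (Nat.lt_succ_of_le hl)).symm, decide_eq_false_iff_not]
  by_contra! h
  have := hp l (by omega)
  omega

/-- The step contributed by a letter smaller than the last one: from the height `#(starts p l)` to
the height `#(starts p (l + 1))`, through the level `#(crossing p l)`. -/
noncomputable def lowerStep (p : Equiv.Perm ℕ) (l : ℕ) : Step :=
  ⟨!descentTop p l, before p l, after p l, descentBottom p l⟩

/-- The step contributed by the letter `l + 1` when it is larger than the last one: from the height
`#(crossing p (l + 1))` to the height `#(crossing p l)`, through the level
`#(starts p (l + 1)) - 1`. -/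
noncomputable def upperStep (n : ℕ) (p : Equiv.Perm ℕ) (l : ℕ) : Step :=
  ⟨descentTop p (l + 1), before p (l + 1), ascentsAfter n p (l + 1), !descentBottom p l⟩

/-- The history of the letters `0, 1, …, l - 1`, in this order. -/
noncomputable def lowerHistory (p : Equiv.Perm ℕ) (l : ℕ) : List Step :=
  (List.range l).reverse.map (lowerStep p)

/-- The history of the letters `n, n - 1, …, l + 1`, in this order. -/
noncomputable def upperHistory (n : ℕ) (p : Equiv.Perm ℕ) (l : ℕ) : List Step :=
  (List.range' l (n - l)).map (upperStep n p)

theorem lowerHistory_mem_histories (p : Equiv.Perm ℕ) (l : ℕ) :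
    lowerHistory p l ∈ histories l #(starts p l) := by
  induction l with
  | zero => simp [lowerHistory, histories, starts_zero]
  | succ l ih =>
    have h := cons_mem_histories (a := before p l) (b := after p l) ih (!descentTop p l)
      (descentBottom p l) (by
        rw [before_add_after, card_starts, add_assoc, toNat_add_toNat_not])
    rw [before_add_after, ← card_starts_succ] at h
    simpa [lowerHistory, List.range_succ, lowerStep] using h

theorem upperHistory_mem_histories (hp : ∀ x, n < x → p x = x) (hlast : p.symm n ≤ l) (hl : l ≤ n) :
    upperHistory n p l ∈ histories (n - l) #(crossing p l) := by
  induction hl using Nat.decreasingInduction with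
  | self => simp [upperHistory, histories, crossing_eq_empty hp le_rfl]
  | of_succ l hl ih =>
    have hasc := ascentsAfter_add_one (l := l + 1) hp hl (by omega)
    have hheight := (card_starts_succ (p := p) (l := l)).symm.trans card_starts
    rw [decide_eq_false (by omega), Bool.toNat_false] at hasc
    rw [← before_add_after (l := l + 1)] at hheight
    have h := cons_mem_histories (a := before p (l + 1)) (b := ascentsAfter n p (l + 1))
      (ih (by omega)) (descentTop p (l + 1)) (!descentBottom p l)
      (by rw [← before_add_after]; omega)
    have hlevel : before p (l + 1) + ascentsAfter n p (l + 1) + (!descentBottom p l).toNat =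
        #(crossing p l) := by
      have := toNat_add_toNat_not (descentBottom p l)
      omega
    rw [hlevel] at h
    rw [upperHistory, show n - l = n - (l + 1) + 1 by omega, List.range'_succ]
    exact h

/-- The histories of the letters on either side of the last letter `p.symm n`. -/
noncomputable def code (n : ℕ) (p : Equiv.Perm ℕ) : Code :=
  ⟨#(crossing p (p.symm n)), lowerHistory p (p.symm n), upperHistory n p (p.symm n)⟩

theorem descentTop_last (hp : ∀ x, n < x → p x = x) : descentTop p (p.symm n) = false :=
  descentTop_eq_false hp (p.apply_symm_apply n).ge

theorem after_last (hp : ∀ x, n < x → p x = x) : after p (p.symm n) = 0 := by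
  simp [after_eq hp (symm_le hp le_rfl)]

theorem before_last (hp : ∀ x, n < x → p x = x) :
    before p (p.symm n) = #(crossing p (p.symm n)) := by
  rw [← before_add_after, after_last hp, add_zero]

theorem code_mem_codes (hp : ∀ x, n < x → p x = x) : code n p ∈ codes n := by
  have hlast : p.symm n ≤ n := symm_le hp le_rfl
  have hlower := lowerHistory_mem_histories p (p.symm n)
  rw [card_starts, descentTop_last hp, Bool.toNat_false] at hlower
  have hle : #(crossing p (p.symm n)) ≤ p.symm n :=
    (card_le_card fun y hy ↦ mem_range.2 (mem_crossing.1 hy).1).trans_eq (card_range _)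
  exact mem_codes.2 ⟨hle.trans hlast, _, _, Nat.add_sub_cancel' hlast, hlower,
    upperHistory_mem_histories hp le_rfl hlast⟩

theorem symm_eq_of_code_eq (h : code n p = code n r) : p.symm n = r.symm n := by
  simpa [code, lowerHistory] using congrArg (fun c ↦ c.lower.length) h

theorem lowerStep_eq_of_code_eq (h : code n p = code n r) (hl : l < p.symm n) :
    lowerStep p l = lowerStep r l := by
  have hlower : lowerHistory p (p.symm n) = lowerHistory r (r.symm n) := congrArg Code.lower h
  rw [lowerHistory, lowerHistory, ← symm_eq_of_code_eq h, List.map_inj_left] at hlower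
  exact hlower l (by simpa using hl)

theorem upperStep_eq_of_code_eq (h : code n p = code n r) (hlast : p.symm n ≤ l) (hl : l < n) :
    upperStep n p l = upperStep n r l := by
  have hupper : upperHistory n p (p.symm n) = upperHistory n r (r.symm n) := congrArg Code.upper h
  rw [upperHistory, upperHistory, ← symm_eq_of_code_eq h, List.map_inj_left] at hupper
  exact hupper l (by rw [List.mem_range'_1]; omega)

theorem descentTop_eq_and_before_eq_of_code_eq (hp : ∀ x, n < x → p x = x)
    (hr : ∀ x, n < x → r x = x) (h : code n p = code n r) (l : ℕ) :
    descentTop p l = descentTop r l ∧ before p l = before r l := by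
  have hlast := symm_eq_of_code_eq h
  rcases lt_trichotomy l (p.symm n) with hl | rfl | hl
  · have hstep := lowerStep_eq_of_code_eq h hl
    exact ⟨Bool.not_inj (congrArg Step.stays hstep), congrArg Step.left hstep⟩
  · have hheight : #(crossing p (p.symm n)) = #(crossing r (r.symm n)) := congrArg Code.height h
    rw [← before_last hp, ← before_last hr, ← hlast] at hheight
    exact ⟨(descentTop_last hp).trans (hlast ▸ (descentTop_last hr).symm), hheight⟩
  obtain ⟨m, rfl⟩ : ∃ m, l = m + 1 := ⟨l - 1, by omega⟩
  rcases lt_or_ge m n with hm | hm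
  · have hstep := upperStep_eq_of_code_eq h (Nat.le_of_lt_succ hl) hm
    exact ⟨congrArg Step.stays hstep, congrArg Step.left hstep⟩
  · have hm' := Nat.lt_succ_of_le hm
    rw [before_eq_zero hp hm'.le, before_eq_zero hr hm'.le,
      descentTop_eq_false hp (by rw [hp _ hm']; exact hm'.le),
      descentTop_eq_false hr (by rw [hr _ hm']; exact hm'.le)]
    exact ⟨rfl, rfl⟩

theorem descentBottom_eq_of_code_eq (hp : ∀ x, n < x → p x = x)
    (hr : ∀ x, n < x → r x = x) (h : code n p = code n r) (l : ℕ) :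
    descentBottom p l = descentBottom r l := by
  rcases lt_or_ge l (p.symm n) with hl | hl
  · exact congrArg Step.rises (lowerStep_eq_of_code_eq h hl)
  rcases lt_or_ge l n with hln | hln
  · exact Bool.not_inj (congrArg Step.rises (upperStep_eq_of_code_eq h hl hln))
  · rw [descentBottom_eq_false hp hln, descentBottom_eq_false hr hln]

theorem code_injOn : Set.InjOn (code n) {p | ∀ x, n < x → p x = x} := by
  intro p hp r hr h
  have hletter := descentTop_eq_and_before_eq_of_code_eq hp hr h
  exact eq_of_descents_eq (fun l ↦ (hletter l).1) (descentBottom_eq_of_code_eq hp hr h)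
    fun l ↦ (hletter l).2

theorem sum_map_lowerHistory (f : Step → ℕ) (p : Equiv.Perm ℕ) (l : ℕ) :
    ((lowerHistory p l).map f).sum = ∑ i ∈ range l, f (lowerStep p i) := by
  rw [lowerHistory, List.map_map, List.map_reverse, List.sum_reverse]
  rfl

theorem sum_map_upperHistory (f : Step → ℕ) (n : ℕ) (p : Equiv.Perm ℕ) (l : ℕ) :
    ((upperHistory n p l).map f).sum = ∑ i ∈ Ico l n, f (upperStep n p i) := by
  rw [upperHistory, List.map_map, Finset.sum, Nat.Ico_eq_range']
  rfl

theorem sum_range_succ_split (f : ℕ → ℕ) (hb : b ≤ n) :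
    ∑ l ∈ range (n + 1), f l = f b + ∑ l ∈ range b, f l + ∑ l ∈ Ico b n, f (l + 1) := by
  rw [sum_Ico_add', add_comm (f b), ← sum_range_succ, sum_range_add_sum_Ico f (by omega)]

/-- The label that replaces `right` when a letter is counted on the other side of the last letter:
`right` counts the `2\underline{31}` patterns of a letter in a lower step and its
`2\underline{13}` patterns in an upper step, and `dualRight` counts the other kind. -/
def Step.dualRight (s : Step) : ℕ := s.right + (!s.stays).toNat

/-- The value of `\underline{31}2` on the word with a given code. -/
def Code.stat31_2 (c : Code) : ℕ :=
  c.height + (c.lower.map Step.left).sum + (c.upper.map Step.left).sum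

/-- The value of `2\underline{31}` on the word with a given code. -/
def Code.stat2_31 (c : Code) : ℕ :=
  (c.lower.map Step.right).sum + (c.upper.map Step.dualRight).sum

theorem Code.stat31_2_swap (c : Code) : c.swap.stat31_2 = c.stat31_2 := add_right_comm _ _ _

theorem dualRight_lowerStep (hp : ∀ x, n < x → p x = x) (hl : l < p.symm n) :
    (lowerStep p l).dualRight = ascentsAfter n p l := by
  have h := ascentsAfter_add_one hp (hl.le.trans (symm_le hp le_rfl)) hl.ne
  simpa [Step.dualRight, lowerStep, hl] using h.symm

theorem dualRight_upperStep (hp : ∀ x, n < x → p x = x) (hlast : p.symm n ≤ l) (hl : l < n) :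
    (upperStep n p l).dualRight = after p (l + 1) := by
  have h := ascentsAfter_add_one (l := l + 1) hp hl (by omega)
  rw [decide_eq_false (by omega)] at h
  rw [Step.dualRight, upperStep]
  have hnot := toNat_add_toNat_not (descentTop p (l + 1))
  rw [Bool.toNat_false] at h
  dsimp only
  omega

theorem stat31_2_code (hp : ∀ x, n < x → p x = x) :
    (code n p).stat31_2 = ∑ l ∈ range (n + 1), before p l := by
  rw [sum_range_succ_split _ (symm_le hp le_rfl), before_last hp, Code.stat31_2, code,
    sum_map_lowerHistory, sum_map_upperHistory]
  rfl

theorem stat2_31_code (hp : ∀ x, n < x → p x = x) :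
    (code n p).stat2_31 = ∑ l ∈ range (n + 1), after p l := by
  rw [sum_range_succ_split _ (symm_le hp le_rfl), after_last hp, Code.stat2_31, code, zero_add,
    sum_map_lowerHistory, sum_map_upperHistory]
  refine congrArg₂ (· + ·) rfl (sum_congr rfl fun l hl ↦ ?_)
  exact dualRight_upperStep hp (mem_Ico.1 hl).1 (mem_Ico.1 hl).2

theorem stat2_31_swap_code (hp : ∀ x, n < x → p x = x) :
    (code n p).swap.stat2_31 = ∑ l ∈ range (n + 1), ascentsAfter n p l := by
  have hlast : ascentsAfter n p (p.symm n) = 0 := by simp [ascentsAfter]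
  rw [sum_range_succ_split _ (symm_le hp le_rfl), hlast, Code.stat2_31, Code.swap, code, zero_add,
    sum_map_lowerHistory, sum_map_upperHistory, add_comm]
  refine congrArg₂ (· + ·) (sum_congr rfl fun l hl ↦ ?_) rfl
  exact dualRight_lowerStep hp (mem_range.1 hl)

end Histories

section Permutations

variable {n : ℕ}

/-- The permutation of `ℕ` that sends each letter of the word of `σ`, prolonged by the letters
`n, n + 1, …`, to its position. -/
noncomputable def pos (σ : Equiv.Perm (Fin n)) : Equiv.Perm ℕ :=
  Equiv.Perm.viaEmbedding σ.symm Fin.valEmbedding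

theorem pos_apply (σ : Equiv.Perm (Fin n)) (x : Fin n) : pos σ x = σ.symm x :=
  Equiv.Perm.viaEmbedding_apply σ.symm Fin.valEmbedding x

theorem pos_symm_apply (σ : Equiv.Perm (Fin n)) (i : Fin n) : (pos σ).symm i = σ i := by
  rw [Equiv.symm_apply_eq, pos_apply, σ.symm_apply_apply]

theorem pos_of_ge (σ : Equiv.Perm (Fin n)) {x : ℕ} (hx : n ≤ x) : pos σ x = x :=
  Equiv.Perm.viaEmbedding_apply_of_notMem σ.symm Fin.valEmbedding x fun ⟨y, hy⟩ ↦
    hx.not_gt (hy ▸ y.isLt)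

theorem pos_injective : Function.Injective (pos (n := n)) :=
  (Equiv.Perm.viaEmbeddingHom_injective (Fin.valEmbedding (n := n))).comp inv_injective

theorem valAt_succ (σ : Equiv.Perm (Fin n)) {i : ℕ} (hi : i < n) :
    valAt σ (i + 1) = (pos σ).symm i + 1 := by
  rw [valAt, dif_pos ⟨by omega, hi⟩, ← pos_symm_apply]
  rfl

theorem card_filter_fin_prod (P : ℕ → ℕ → Prop) [∀ l j, Decidable (P l j)] :
    #{q : Fin n × Fin n | P q.1 q.2} = ∑ l ∈ range n, #{j ∈ range n | P l j} := by
  simp only [card_filter, Fintype.sum_prod_type]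
  rw [← Fin.sum_univ_eq_sum_range]
  exact sum_congr rfl fun l _ ↦ Fin.sum_univ_eq_sum_range (fun j ↦ if P l j then 1 else 0) n

theorem card_filter_range_succ (Q : ℕ → Prop) [DecidablePred Q] :
    #{j ∈ range (n + 1) | 0 < j ∧ Q j} = #{i ∈ range n | Q (i + 1)} := by
  rw [card_filter, card_filter, sum_range_succ']
  simp

theorem stat31_2_eq_sum (σ : Equiv.Perm (Fin (n + 1))) :
    stat31_2 σ = ∑ l ∈ range (n + 1), before (pos σ) l := by
  have hcond (q : Fin (n + 1) × Fin (n + 1)) :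
      (1 < pv q.2 ∧ pv q.2 < pv (σ.symm q.1) ∧ valAt σ (pv q.2) < pv q.1 ∧
        pv q.1 < valAt σ (pv q.2 - 1)) ↔
      0 < (q.2 : ℕ) ∧ (pos σ).symm q.2 < q.1 ∧ q.1 < (pos σ).symm (q.2 - 1) ∧
        (q.2 : ℕ) < pos σ q.1 := by
    have := q.2.isLt
    rcases Nat.eq_zero_or_pos q.2 with hj | hj
    · simp [pv, hj]
    · rw [pv, valAt_succ σ this, Nat.add_sub_cancel, ← Nat.sub_add_cancel hj,
        valAt_succ σ (by omega), pos_apply, pv, pv]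
      simp only [Nat.add_sub_cancel]
      omega
  rw [stat31_2, filter_congr fun q _ ↦ hcond q,
    card_filter_fin_prod fun l j ↦
      0 < j ∧ (pos σ).symm j < l ∧ l < (pos σ).symm (j - 1) ∧ j < pos σ l]
  refine sum_congr rfl fun l hl ↦ ?_
  rw [before, card_filter_range_succ,
    card_filter_crossing (fun x hx ↦ pos_of_ge σ hx) (mem_range_succ_iff.1 hl) (· < pos σ l)]
  rfl

theorem card_filter_after (σ : Equiv.Perm (Fin (n + 1))) (R : ℕ → ℕ → ℕ → Prop)
    [∀ a b c, Decidable (R a b c)] :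
    #{q : Fin (n + 1) × Fin (n + 1) | pv (σ.symm q.1) < pv q.2 ∧ pv q.2 < n + 1 ∧
      R (valAt σ (pv q.2)) (valAt σ (pv q.2 + 1)) (pv q.1)} =
    ∑ l ∈ range (n + 1), #{i ∈ Ico (pos σ l + 1) n |
      R ((pos σ).symm i + 1) ((pos σ).symm (i + 1) + 1) (l + 1)} := by
  have hcond (q : Fin (n + 1) × Fin (n + 1)) :
      (pv (σ.symm q.1) < pv q.2 ∧ pv q.2 < n + 1 ∧
        R (valAt σ (pv q.2)) (valAt σ (pv q.2 + 1)) (pv q.1)) ↔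
      (pos σ q.1 < q.2 ∧ (q.2 : ℕ) < n) ∧
        R ((pos σ).symm q.2 + 1) ((pos σ).symm (q.2 + 1) + 1) (q.1 + 1) := by
    rw [pv, pv, pv, valAt_succ σ q.2.isLt, pos_apply, ← and_assoc, Nat.succ_lt_succ_iff,
      Nat.succ_lt_succ_iff]
    exact and_congr_right fun hj ↦ by rw [valAt_succ σ (Nat.succ_lt_succ hj.2)]
  rw [filter_congr fun q _ ↦ hcond q, card_filter_fin_prod fun l j ↦ (pos σ l < j ∧ j < n) ∧
    R ((pos σ).symm j + 1) ((pos σ).symm (j + 1) + 1) (l + 1)]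
  refine sum_congr rfl fun l _ ↦ congrArg card ?_
  ext i
  simp only [mem_filter, mem_range, mem_Ico, ← and_assoc, and_congr_left_iff]
  omega

theorem stat2_31_eq_sum (σ : Equiv.Perm (Fin (n + 1))) :
    stat2_31 σ = ∑ l ∈ range (n + 1), after (pos σ) l := by
  refine (card_filter_after σ fun a b c ↦ b < c ∧ c < a).trans (sum_congr rfl fun l hl ↦ ?_)
  simp only [Nat.add_lt_add_iff_right]
  exact (after_eq (fun x hx ↦ pos_of_ge σ hx) (mem_range_succ_iff.1 hl)).symm

theorem stat2_13_eq_sum (σ : Equiv.Perm (Fin (n + 1))) :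
    stat2_13 σ = ∑ l ∈ range (n + 1), ascentsAfter n (pos σ) l := by
  refine (card_filter_after σ fun a b c ↦ a < c ∧ c < b).trans (sum_congr rfl fun l _ ↦ ?_)
  simp only [Nat.add_lt_add_iff_right, ascentsAfter]

theorem exists_involutive_of_injective {α β : Type*} {f : α → β} {g : β → β}
    (hf : Function.Injective f) (hg : Function.Involutive g) (h : ∀ a, ∃ b, f b = g (f a)) :
    ∃ φ : α → α, Function.Involutive φ ∧ ∀ a, f (φ a) = g (f a) := by
  choose φ hφ using h
  exact ⟨φ, fun a ↦ hf (by rw [hφ, hφ, hg]), hφ⟩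

/-- The code of a permutation of `n + 1` letters. -/
noncomputable def permCode (σ : Equiv.Perm (Fin (n + 1))) : Code := code n (pos σ)

theorem permCode_mem_codes (σ : Equiv.Perm (Fin (n + 1))) : permCode σ ∈ codes n :=
  code_mem_codes fun _ hx ↦ pos_of_ge σ hx

theorem permCode_injective : Function.Injective (permCode (n := n)) := fun σ τ h ↦
  pos_injective (code_injOn (fun _ hx ↦ pos_of_ge σ hx) (fun _ hx ↦ pos_of_ge τ hx) h)

theorem exists_permCode_eq {c : Code} (hc : c ∈ codes n) :
    ∃ σ : Equiv.Perm (Fin (n + 1)), permCode σ = c := by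
  have hcard : #(codes n) ≤ #(univ : Finset (Equiv.Perm (Fin (n + 1)))) := by
    simpa [Fintype.card_perm] using card_codes_le n
  obtain ⟨σ, -, hσ⟩ := surjOn_of_injOn_of_card_le permCode (fun σ _ ↦ permCode_mem_codes σ)
    permCode_injective.injOn hcard hc
  exact ⟨σ, hσ⟩

theorem stat31_2_eq_permCode (σ : Equiv.Perm (Fin (n + 1))) :
    stat31_2 σ = (permCode σ).stat31_2 :=
  (stat31_2_eq_sum σ).trans (stat31_2_code fun _ hx ↦ pos_of_ge σ hx).symm

theorem stat2_31_eq_permCode (σ : Equiv.Perm (Fin (n + 1))) :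
    stat2_31 σ = (permCode σ).stat2_31 :=
  (stat2_31_eq_sum σ).trans (stat2_31_code fun _ hx ↦ pos_of_ge σ hx).symm

theorem stat2_13_eq_permCode (σ : Equiv.Perm (Fin (n + 1))) :
    stat2_13 σ = (permCode σ).swap.stat2_31 :=
  (stat2_13_eq_sum σ).trans (stat2_31_swap_code fun _ hx ↦ pos_of_ge σ hx).symm

end Permutations

end Paper

namespace Paper

/-- there is an involution φ̂ on Sₙ preserving \underline{31}2 and
exchanging 2\underline{31} with 2\underline{13}. -/
theorem exists_involution_phi (n : ℕ) :
    ∃ φ : Equiv.Perm (Fin n) → Equiv.Perm (Fin n),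
      Function.Involutive φ ∧
      ∀ σ : Equiv.Perm (Fin n),
        stat31_2 σ = stat31_2 (φ σ) ∧ stat2_31 σ = stat2_13 (φ σ) := by
  rcases n with _ | n
  · exact ⟨id, fun _ ↦ rfl, fun σ ↦ by simp [stat2_31, stat2_13]⟩
  obtain ⟨φ, hφ, hcode⟩ := exists_involutive_of_injective permCode_injective
    Code.swap_involutive fun σ ↦ exists_permCode_eq (Code.swap_mem_codes (permCode_mem_codes σ))
  refine ⟨φ, hφ, fun σ ↦ ⟨?_, ?_⟩⟩
  · rw [stat31_2_eq_permCode, stat31_2_eq_permCode, hcode, Code.stat31_2_swap]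
  · rw [stat2_31_eq_permCode, stat2_13_eq_permCode, hcode, Code.swap_involutive]

end Paper
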